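/- Let θ ≥ ω₂ be a cardinal and let M be an elementary submodel of H_θ which is an ω₁-guessing set. Then ω₁ ⊆ M. -/

import Mathlib

noncomputable section
namespace GuessingPaper

/- Framework: we work in Mathlib's model `ZFSet` of ZFC, viewed as the ground
model `V`.  A generic extension `V[G]` is represented via a (hypothetical)
`V`-generic filter `G : Set ZFSet`; subsets of ground-model sets belonging to
`V[G]` are represented as classes `x : Set ZFSet` of the form
`{y | ∃ p ∈ G, (y, p) ∈ A}` for some ground set `A` (this is exactly the class
of `G`-evaluations of `ℙ`-names for subsets of ground sets). -/



open FirstOrder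

/-- `x` is a (von Neumann) ordinal. -/
def IsOrd (x : ZFSet) : Prop := x.IsOrdinal

/-- `x` is countable. -/
def Ctble (x : ZFSet) : Prop := x.toSet.Countable

/-- iterated unions, for the transitive closure -/
def unions : ℕ → ZFSet → ZFSet
  | 0, x => x
  | n + 1, x => ZFSet.sUnion (unions n x)

/-- the transitive closure of `x` (as a class) -/
def tcl (x : ZFSet) : Set ZFSet := ⋃ n : ℕ, (unions n x).toSet

/-- `H_θ`: the class of sets hereditarily of cardinality `< θ`. -/
def HSet (θ : Cardinal) : Set ZFSet := {x | Cardinal.mk ↥(tcl x) < θ}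

/-- `x` is a member of `ω₂`, i.e. an ordinal of cardinality `≤ ℵ₁`. -/
def MemOmega2 (x : ZFSet) : Prop := IsOrd x ∧ Cardinal.mk ↥x.toSet ≤ Cardinal.aleph 1

/-- `M` has size `ω₁`. -/
def SizeOmega1 (M : ZFSet) : Prop := Cardinal.mk ↥M.toSet = Cardinal.aleph 1

/-- `𝒫_{ω₂}(H_θ)`: subsets of `H_θ` of size `< ω₂`. -/
def Pom2 (θ : Cardinal) : Set ZFSet :=
  {M | M.toSet ⊆ HSet θ ∧ Cardinal.mk ↥M.toSet < Cardinal.aleph 2}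

/-- `ω₁ ⊆ M`: every countable ordinal belongs to `M`. -/
def Omega1Sub (M : ZFSet) : Prop := ∀ x, IsOrd x → Ctble x → x ∈ M

/-- `M ∩ ω₂ ∈ ω₂`. -/
def CapOmega2 (M : ZFSet) : Prop :=
  ∃ δ, MemOmega2 δ ∧ ∀ x, MemOmega2 x → (x ∈ M ↔ x ∈ δ)

/-- the ∈-structure on a class of sets, in the language with one binary relation -/
def memStructure (S : Set ZFSet) : Language.order.Structure S :=
  @Language.orderStructure S ⟨fun x y => (x : ZFSet) ∈ (y : ZFSet)⟩

/-- `M ≺ N` : `M` is an elementary submodel of `N` (as ∈-structures). -/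
def ElemSub (M N : Set ZFSet) : Prop :=
  M ⊆ N ∧ ∀ (k : ℕ) (φ : Language.order.Formula (Fin k)) (v : Fin k → ZFSet)
    (hM : ∀ i, v i ∈ M) (hN : ∀ i, v i ∈ N),
    (@Language.Formula.Realize _ _ (memStructure M) _ φ (fun i => ⟨v i, hM i⟩)) ↔
    (@Language.Formula.Realize _ _ (memStructure N) _ φ (fun i => ⟨v i, hN i⟩))

/-! ### Guessing models (in `V`) -/

/-- `x` is bounded in `M`. -/
def BoundedIn (M x : ZFSet) : Prop := ∃ X, X ∈ M ∧ x ⊆ X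

/-- `x` is `ω₁`-approximated in `M`. -/
def ApproxIn (M x : ZFSet) : Prop := ∀ a, a ∈ M → Ctble a → a ∩ x ∈ M

/-- `x` is guessed in `M`. -/
def GuessedIn (M x : ZFSet) : Prop := ∃ y, y ∈ M ∧ y ∩ M = x ∩ M

/-- `M` is an `ω₁`-guessing set. -/
def IsGuessing (M : ZFSet) : Prop :=
  ∀ x : ZFSet, BoundedIn M x → (ApproxIn M x ↔ GuessedIn M x)



/-! ### Forcing -/

/-- `p ≤ q` in the order coded by the set of (Kuratowski) pairs `le`. -/
def Le (le p q : ZFSet) : Prop := ZFSet.pair p q ∈ le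

/-- `(P, le)` is a forcing notion: `le` is a preorder on `P`, coded as a set of pairs. -/
def IsForcing (P le : ZFSet) : Prop :=
  (∀ x ∈ le, ∃ p ∈ P, ∃ q ∈ P, x = ZFSet.pair p q) ∧
  (∀ p ∈ P, Le le p p) ∧
  (∀ p q r : ZFSet, Le le p q → Le le q r → Le le p r)

/-- `p` and `q` are compatible. -/
def Compat (P le p q : ZFSet) : Prop := ∃ r, r ∈ P ∧ Le le r p ∧ Le le r q

/-- `D` is a dense subset of the forcing `(P, le)`. -/
def DenseSub (P le D : ZFSet) : Prop := D ⊆ P ∧ ∀ p ∈ P, ∃ q ∈ D, Le le q p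

/-- the class `D` is dense in `(P, le)`. -/
def DenseClass (P le : ZFSet) (D : Set ZFSet) : Prop :=
  (∀ p ∈ D, p ∈ P) ∧ ∀ p ∈ P, ∃ q ∈ D, Le le q p

/-- the class `D` is predense below `p`. -/
def PredenseBelow (P le : ZFSet) (D : Set ZFSet) (p : ZFSet) : Prop :=
  ∀ r, r ∈ P → Le le r p → ∃ s ∈ D, Compat P le s r

/-- `q` is an `(M, ℙ)`-generic condition. -/
def MGenericCond (P le M q : ZFSet) : Prop :=
  ∀ D : ZFSet, DenseSub P le D → D ∈ M →
    PredenseBelow P le {s | s ∈ M ∧ s ∈ D} q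

/-- `G` is a filter on `(P, le)`. -/
def IsVFilter (P le : ZFSet) (G : Set ZFSet) : Prop :=
  G.Nonempty ∧ (∀ p ∈ G, p ∈ P) ∧
  (∀ p ∈ G, ∀ q, q ∈ P → Le le p q → q ∈ G) ∧
  (∀ p ∈ G, ∀ q ∈ G, ∃ r ∈ G, Le le r p ∧ Le le r q)

/-- `G` is a `V`-generic filter on `(P, le)`: it meets every dense subset
(all of which belong to the ambient universe `V`). -/
def VGeneric (P le : ZFSet) (G : Set ZFSet) : Prop :=
  IsVFilter P le G ∧ ∀ D : ZFSet, DenseSub P le D → ∃ p ∈ G, p ∈ D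

/-- the class `x` is a set of the generic extension `V[G]` (as a subset of `V`):
it is the evaluation by `G` of a `ℙ`-name for a subset of a ground-model set. -/
def InExt (G : Set ZFSet) (x : Set ZFSet) : Prop :=
  ∃ A : ZFSet, x = {y | ∃ p ∈ G, ZFSet.pair y p ∈ A}

/-- the class `x` is (coded by) a set of the ground model `V`. -/
def InV (x : Set ZFSet) : Prop := ∃ z : ZFSet, x = z.toSet

/-- evaluation of a `ℙ`-name `τ` by a filter `G`:
`val G τ = { val G σ ∣ ∃ p ∈ G, (σ, p) ∈ τ }` (by `∈`-recursion). -/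
def val (G : Set ZFSet) : ZFSet → ZFSet :=
  (ZFSet.mem_wf.transGen).fix fun τ IH =>
    @ZFSet.image
      (fun σ => @dite ZFSet (Relation.TransGen (· ∈ ·) σ τ) (Classical.dec _)
        (fun h => IH σ h) (fun _ => ∅))
      (Classical.allZFSetDefinable _)
      (ZFSet.sep (fun σ => ∃ p ∈ G, ZFSet.pair σ p ∈ τ)
        (ZFSet.sUnion (ZFSet.sUnion τ)))

/-- `M[G]`: the class of evaluations by `G` of names belonging to `M`. -/
def MExt (G : Set ZFSet) (M : ZFSet) : Set ZFSet := {x | ∃ τ, τ ∈ M ∧ val G τ = x}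




/-! ### Notions of the generic extension `V[G]` -/

/-- `a` is countable in `V[G]`: there is an enumeration of `a` by `ω` in `V[G]`. -/
def CtbleExt (G : Set ZFSet) (a : ZFSet) : Prop :=
  ∃ R : Set ZFSet, InExt G R ∧
    (∀ z ∈ R, ∃ n, n ∈ ZFSet.omega ∧ ∃ y, y ∈ a ∧ z = ZFSet.pair n y) ∧
    (∀ n y y', ZFSet.pair n y ∈ R → ZFSet.pair n y' ∈ R → y = y') ∧
    (∀ y, y ∈ a → ∃ n, n ∈ ZFSet.omega ∧ ZFSet.pair n y ∈ R)

/-- in `V[G]`, the set (coded by) `x` is `ω₁`-approximated in `M`. -/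
def ApproxInExt (G : Set ZFSet) (M : ZFSet) (x : Set ZFSet) : Prop :=
  ∀ a, a ∈ M → CtbleExt G a → ∃ z, z ∈ M ∧ z.toSet = a.toSet ∩ x

/-- the set (coded by) `x` is guessed in `M`. -/
def GuessedInExt (M : ZFSet) (x : Set ZFSet) : Prop :=
  ∃ y, y ∈ M ∧ y.toSet ∩ M.toSet = x ∩ M.toSet

/-- `M` is an `ω₁`-guessing set in the generic extension `V[G]`. -/
def GuessingInExt (G : Set ZFSet) (M : ZFSet) : Prop :=
  ∀ x : Set ZFSet, InExt G x → (∃ X, X ∈ M ∧ x ⊆ X.toSet) →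
    (ApproxInExt G M x ↔ GuessedInExt M x)

/-- in `V[G]` there is a surjection from `ω` onto `ω₁^V` (i.e. `ω₁` is collapsed). -/
def CollapsesOmega1 (G : Set ZFSet) : Prop :=
  ∃ R : Set ZFSet, InExt G R ∧
    (∀ n y y', ZFSet.pair n y ∈ R → ZFSet.pair n y' ∈ R → y = y') ∧
    (∀ x, IsOrd x → Ctble x → ∃ n, n ∈ ZFSet.omega ∧ ZFSet.pair n x ∈ R)

/-- in `V[G]` there is a surjection from an ordinal `< ω₂^V` onto `ω₂^V`. -/
def CollapsesOmega2 (G : Set ZFSet) : Prop :=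
  ∃ δ : ZFSet, IsOrd δ ∧ Cardinal.mk ↥δ.toSet ≤ Cardinal.aleph 1 ∧
    ∃ R : Set ZFSet, InExt G R ∧
      (∀ β y y', ZFSet.pair β y ∈ R → ZFSet.pair β y' ∈ R → y = y') ∧
      (∀ x, MemOmega2 x → ∃ β, β ∈ δ ∧ ZFSet.pair β x ∈ R)

/-- the class `x` has size `< ω₂` in `V[G]`: in `V[G]` it is the surjective image of an
ordinal of size `≤ ℵ₁`. -/
def LtOmega2Ext (G : Set ZFSet) (x : Set ZFSet) : Prop :=
  ∃ δ : ZFSet, IsOrd δ ∧ Cardinal.mk ↥δ.toSet ≤ Cardinal.aleph 1 ∧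
    ∃ R : Set ZFSet, InExt G R ∧
      (∀ β y y', ZFSet.pair β y ∈ R → ZFSet.pair β y' ∈ R → y = y') ∧
      (∀ y ∈ x, ∃ β, β ∈ δ ∧ ZFSet.pair β y ∈ R)


/-! ### Stationarity, properness, and the guessing-model principles -/

/-- `M` is closed under `F` (viewed as a function on finite subsets). -/
def ClosedUnderF (F : ZFSet → ZFSet) (M : ZFSet) : Prop :=
  ∀ a : ZFSet, a ⊆ M → a.toSet.Finite → F a ⊆ M

/-- `F` maps `𝒫_ω(H_θ)` into `𝒫_{ω₂}(H_θ)`. -/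
def GoodF (θ : Cardinal) (F : ZFSet → ZFSet) : Prop :=
  ∀ a : ZFSet, a.toSet ⊆ HSet θ → a.toSet.Finite →
    (F a).toSet ⊆ HSet θ ∧ Cardinal.mk ↥(F a).toSet < Cardinal.aleph 2

/-- `S` is stationary in `𝒫_{ω₂}(H_θ)`: every `F : 𝒫_ω(H_θ) → 𝒫_{ω₂}(H_θ)` has a closure
point `M ≺ H_θ` in `S` with `M ∩ ω₂ ∈ ω₂`. -/
def Stationary (θ : Cardinal) (S : Set ZFSet) : Prop :=
  ∀ F : ZFSet → ZFSet, GoodF θ F →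
    ∃ M ∈ S, ElemSub M.toSet (HSet θ) ∧ CapOmega2 M ∧ ClosedUnderF F M

/-- the value `F(a)` of the function (of `V[G]`) coded by the relation `R`. -/
def FExtVal (R : Set ZFSet) (a : ZFSet) : Set ZFSet := {y | ZFSet.pair a y ∈ R}

/-- the relation `R` codes a function `F : 𝒫_ω(H_θ^V) → 𝒫_{ω₂}(H_θ^V)` of `V[G]`. -/
def GoodFExt (G : Set ZFSet) (θ : Cardinal) (R : Set ZFSet) : Prop :=
  ∀ a : ZFSet, a.toSet ⊆ HSet θ → a.toSet.Finite →
    FExtVal R a ⊆ HSet θ ∧ LtOmega2Ext G (FExtVal R a)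

/-- in `V[G]`, the set `S` (of the ground model) is stationary in `𝒫_{ω₂}(H_θ^V)`:
every function `F : 𝒫_ω(H_θ^V) → 𝒫_{ω₂}(H_θ^V)` belonging to `V[G]` has a closure point
`M ≺ H_θ^V` in `S` with `M ∩ ω₂ ∈ ω₂`. -/
def StationaryExt (G : Set ZFSet) (θ : Cardinal) (S : Set ZFSet) : Prop :=
  ∀ R : Set ZFSet, InExt G R → GoodFExt G θ R →
    ∃ M ∈ S, ElemSub M.toSet (HSet θ) ∧ CapOmega2 M ∧
      ∀ a : ZFSet, a ⊆ M → a.toSet.Finite → FExtVal R a ⊆ M.toSet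

/-- the forcing `(P, le)` is proper for the family `S` of models. -/
def ProperFor (P le : ZFSet) (S : Set ZFSet) : Prop :=
  ∀ M ∈ S, ∀ p, p ∈ M → p ∈ P → ∃ q, q ∈ P ∧ Le le q p ∧ MGenericCond P le M q

/-- the forcing `(P, le)` is proper for models of size `ω₁`, i.e. for all
`M ≺ (H_θ, ∈, ℙ)` with `ω₁ ⊆ M` and `|M| = ω₁`, for every sufficiently large regular `θ`. -/
def ProperForSizeOmega1 (P le : ZFSet) : Prop :=
  ∃ θ₀ : Cardinal, ∀ θ : Cardinal, θ₀ ≤ θ → θ.IsRegular →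
    ProperFor P le {M | ElemSub M.toSet (HSet θ) ∧ P ∈ M ∧ le ∈ M ∧
      Omega1Sub M ∧ SizeOmega1 M}

/-- the forcing `(P, le)` preserves `ω₁`. -/
def PreservesOmega1 (P le : ZFSet) : Prop :=
  ∀ G : Set ZFSet, VGeneric P le G → ¬ CollapsesOmega1 G

/-- the forcing `(P, le)` preserves the cardinal `ω₂`. -/
def PreservesOmega2 (P le : ZFSet) : Prop :=
  ∀ G : Set ZFSet, VGeneric P le G → ¬ CollapsesOmega2 G

/-- the forcing `(P, le)` has the `ω₁`-approximation property. -/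
def ApproxProp (P le : ZFSet) : Prop :=
  ∀ G : Set ZFSet, VGeneric P le G →
    ∀ x : Set ZFSet, InExt G x → (∃ X : ZFSet, x ⊆ X.toSet) →
      (∀ a : ZFSet, Ctble a → InV (a.toSet ∩ x)) → InV x

/-- `GMP(ω₂)`: for every regular `θ ≥ ω₂`, the `ω₁`-guessing elementary submodels of `H_θ`
of size `ω₁` are stationary in `𝒫_{ω₂}(H_θ)`. -/
def GMP : Prop :=
  ∀ θ : Cardinal.{1}, Cardinal.aleph 2 ≤ θ → θ.IsRegular →
    Stationary θ {M | M ∈ Pom2 θ ∧ ElemSub M.toSet (HSet θ) ∧ SizeOmega1 M ∧ IsGuessing M}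

/-- `M` is indestructibly `ω₁`-guessing: it is `ω₁`-guessing and remains so in any
generic extension by an `ω₁`-preserving forcing. -/
def IndestructiblyGuessing (M : ZFSet) : Prop :=
  IsGuessing M ∧ ∀ P le : ZFSet, IsForcing P le → PreservesOmega1 P le →
    ∀ G : Set ZFSet, VGeneric P le G → GuessingInExt G M

/-- `IGMP(ω₂)`: for every regular `θ ≥ ω₂` there are stationarily many indestructibly
`ω₁`-guessing `M ∈ 𝒫_{ω₂}(H_θ)`. -/
def IGMP : Prop :=
  ∀ θ : Cardinal.{1}, Cardinal.aleph 2 ≤ θ → θ.IsRegular →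
    Stationary θ {M | M ∈ Pom2 θ ∧ IndestructiblyGuessing M}

/-- `ℙ-IGMP(ω₂)`: for every sufficiently large regular `θ`, the `ω₁`-guessing sets of size
`ω₁` that remain `ω₁`-guessing after forcing with `ℙ = (P, le)` are stationary in
`𝒫_{ω₂}(H_θ)`. -/
def PIGMP (P le : ZFSet) : Prop :=
  ∃ θ₀ : Cardinal, ∀ θ : Cardinal, θ₀ ≤ θ → θ.IsRegular →
    Stationary θ {M | M ∈ Pom2 θ ∧ SizeOmega1 M ∧ IsGuessing M ∧
      ∀ G : Set ZFSet, VGeneric P le G → GuessingInExt G M}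

/-- `FA({ℙ}, ω₁)`: for every family of `ω₁`-many dense subsets of `ℙ = (P, le)` there is a
filter meeting all of them. -/
def FAomega1 (P le : ZFSet) : Prop :=
  ∀ D : Set ZFSet, (∀ d ∈ D, DenseSub P le d) → Cardinal.mk ↥D ≤ Cardinal.aleph 1 →
    ∃ G : Set ZFSet, IsVFilter P le G ∧ ∀ d ∈ D, ∃ p ∈ G, p ∈ d

/-!
Suppose `ω₁ ⊈ M` and let `δ` be the least countable ordinal outside `M`. As `ω₁ ∈ H_θ`, by
elementarity `M` contains an ordinal of uncountable cofinality, which is above `δ`; let `κ` be the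
least ordinal of `M` above `δ`, so that `κ ∩ M = δ`. By elementarity `δ` is a limit point of every
cofinal subset of `κ` lying in `M`; so in `M`, and hence really, every cofinal subset of `κ` has a
limit point below `κ`, that is, `cof κ > ω`.

Let `x ⊆ δ` be cofinal of order type `ω`. A countable `a ∈ M` is bounded in `κ`, hence bounded in
`δ` by elementarity, so `a ∩ x` is finite and belongs to `M`. Thus `x` is `ω₁`-approximated in `M`,
and it is guessed by some `y ∈ M`. Now `δ < κ` is a limit point of `y`, so by elementarity some
limit point `α` of `y` lies in `κ ∩ M = δ`. But `y` and `x` agree below `δ`, and `x ∩ α` is finite.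
-/

local instance instMemStructure (S : Set ZFSet) : Language.order.Structure S := memStructure S

/-- Transitive classes, over which bounded quantifiers are absolute. -/
def IsTransitiveClass (S : Set ZFSet) : Prop := ∀ ⦃x y⦄, x ∈ y → y ∈ S → x ∈ S

/-- Classes containing the elements and the subsets of their elements; a quantifier over the
subsets of an element can then be bounded by the class. -/
structure IsSupertransitiveClass (S : Set ZFSet) : Prop where
  isTransitiveClass : IsTransitiveClass S
  mem_of_subset : ∀ ⦃x y⦄, x ⊆ y → y ∈ S → x ∈ S

section Definability

variable {A S : Set ZFSet} {n : ℕ}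

/-- The language of set theory with a constant for each element of `S` belonging to `A`. -/
abbrev LanguageOver (A S : Set ZFSet) : Language := Language.order[[{a : S | (a : ZFSet) ∈ A}]]

/-- On tuples from `S`, the map `t` is the interpretation of a term of `LanguageOver A S`, that is,
a coordinate or an element of `A ∩ S`. -/
def IsTermOver (A S : Set ZFSet) (t : (Fin n → ZFSet) → ZFSet) : Prop :=
  ∃ τ : (LanguageOver A S).Term (Fin n),
    ∀ v : Fin n → S, ((τ.realize v : S) : ZFSet) = t fun i => v i

/-- The trace on `S` of `P` is definable in the ∈-structure `S` with parameters from `A ∩ S`.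
In the quantifier lemmas the bound variable is coordinate `0`, and `Fin.tail` holds the others. -/
def DefinableOver (A S : Set ZFSet) (P : (Fin n → ZFSet) → Prop) : Prop :=
  {a : S | (a : ZFSet) ∈ A}.Definable Language.order {v : Fin n → S | P fun i => v i}

namespace IsTermOver

variable {t : (Fin n → ZFSet) → ZFSet}

theorem var (i : Fin n) : IsTermOver A S fun v => v i :=
  ⟨Language.Term.var i, fun _ => rfl⟩

theorem const {a : ZFSet} (haA : a ∈ A) (haS : a ∈ S) :
    IsTermOver A S fun _ : Fin n → ZFSet => a :=
  ⟨Language.Constants.term (Language.con Language.order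
    (⟨⟨a, haS⟩, haA⟩ : {a : S | (a : ZFSet) ∈ A})), fun _ => rfl⟩

theorem tail (ht : IsTermOver A S t) :
    IsTermOver A S fun w : Fin (n + 1) → ZFSet => t (Fin.tail w) := by
  obtain ⟨τ, hτ⟩ := ht
  exact ⟨τ.relabel Fin.succ, fun w => by rw [Language.Term.realize_relabel, hτ]; rfl⟩

theorem mem_of_forall_mem (ht : IsTermOver A S t) {v : Fin n → ZFSet} (hv : ∀ i, v i ∈ S) :
    t v ∈ S := by
  obtain ⟨τ, hτ⟩ := ht
  exact hτ (fun i => ⟨v i, hv i⟩) ▸ Subtype.coe_prop _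

end IsTermOver

namespace DefinableOver

variable {P Q : (Fin n → ZFSet) → Prop} {t u : (Fin n → ZFSet) → ZFSet}

theorem congr (hP : DefinableOver A S P)
    (h : ∀ v : Fin n → ZFSet, (∀ i, v i ∈ S) → (P v ↔ Q v)) : DefinableOver A S Q := by
  have : {v : Fin n → S | P fun i => v i} = {v : Fin n → S | Q fun i => v i} :=
    Set.ext fun v => h _ fun i => (v i).2
  rwa [DefinableOver, ← this]

theorem mem (ht : IsTermOver A S t) (hu : IsTermOver A S u) :
    DefinableOver A S fun v => t v ∈ u v := by
  obtain ⟨τ, hτ⟩ := ht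
  obtain ⟨υ, hυ⟩ := hu
  let memSymb : (LanguageOver A S).Relations 2 :=
    (Language.order.lhomWithConstants _).onRelation Language.leSymb
  refine ⟨memSymb.formula₂ τ υ, Set.ext fun v => ?_⟩
  change t _ ∈ u _ ↔ (memSymb.formula₂ τ υ).Realize v
  rw [← hτ, ← hυ, Language.Formula.realize_rel₂]
  rfl

theorem eq (ht : IsTermOver A S t) (hu : IsTermOver A S u) :
    DefinableOver A S fun v => t v = u v := by
  obtain ⟨τ, hτ⟩ := ht
  obtain ⟨υ, hυ⟩ := hu
  refine ⟨τ.equal υ, Set.ext fun v => ?_⟩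
  change t _ = u _ ↔ (τ.equal υ).Realize v
  rw [← hτ, ← hυ, Subtype.coe_inj, Language.Formula.realize_equal]

theorem not (hP : DefinableOver A S P) : DefinableOver A S fun v => ¬ P v := Set.Definable.compl hP

theorem and (hP : DefinableOver A S P) (hQ : DefinableOver A S Q) :
    DefinableOver A S fun v => P v ∧ Q v := Set.Definable.inter hP hQ

theorem or (hP : DefinableOver A S P) (hQ : DefinableOver A S Q) :
    DefinableOver A S fun v => P v ∨ Q v := Set.Definable.union hP hQ

theorem imp (hP : DefinableOver A S P) (hQ : DefinableOver A S Q) :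
    DefinableOver A S fun v => P v → Q v := Set.Definable.himp hP hQ

theorem exists_mem {P : (Fin n → ZFSet) → ZFSet → Prop}
    (hP : DefinableOver A S fun w : Fin (n + 1) → ZFSet => P (Fin.tail w) (w 0)) :
    DefinableOver A S fun v => ∃ x ∈ S, P v x := by
  have himage := Set.Definable.image_comp hP Fin.succ
  rw [DefinableOver]
  convert himage using 1
  ext v
  constructor
  · rintro ⟨x, hx, h⟩
    exact ⟨Fin.cons ⟨x, hx⟩ v, h, rfl⟩
  · rintro ⟨w, hw, rfl⟩
    exact ⟨w 0, (w 0).2, hw⟩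

theorem forall_mem {P : (Fin n → ZFSet) → ZFSet → Prop}
    (hP : DefinableOver A S fun w : Fin (n + 1) → ZFSet => P (Fin.tail w) (w 0)) :
    DefinableOver A S fun v => ∀ x ∈ S, P v x :=
  (exists_mem (P := fun v x => ¬ P v x) hP.not).not.congr fun _ _ => by
    simp only [not_exists, not_and, not_not]

theorem bex (hS : IsTransitiveClass S) (ht : IsTermOver A S t)
    {P : (Fin n → ZFSet) → ZFSet → Prop}
    (hP : DefinableOver A S fun w : Fin (n + 1) → ZFSet => P (Fin.tail w) (w 0)) :
    DefinableOver A S fun v => ∃ x ∈ t v, P v x :=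
  (exists_mem ((mem (.var 0) ht.tail).and hP)).congr fun _ hv =>
    ⟨fun ⟨x, _, hx⟩ => ⟨x, hx⟩,
      fun ⟨x, hx, h⟩ => ⟨x, hS hx (ht.mem_of_forall_mem hv), hx, h⟩⟩

theorem ball (hS : IsTransitiveClass S) (ht : IsTermOver A S t)
    {P : (Fin n → ZFSet) → ZFSet → Prop}
    (hP : DefinableOver A S fun w : Fin (n + 1) → ZFSet => P (Fin.tail w) (w 0)) :
    DefinableOver A S fun v => ∀ x ∈ t v, P v x :=
  (bex hS ht (P := fun v x => ¬ P v x) hP.not).not.congr fun _ _ => by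
    simp only [not_exists, not_and, not_not]

theorem mem_of_finite (ht : IsTermOver A S t) {s : Set ZFSet} (hs : s.Finite) (hsA : s ⊆ A)
    (hsS : s ⊆ S) : DefinableOver A S fun v => t v ∈ s := by
  induction s, hs using Set.Finite.induction_on with
  | empty => exact Set.definable_empty
  | insert _ _ ih =>
    rw [Set.insert_subset_iff] at hsA hsS
    exact (eq ht (IsTermOver.const hsA.1 hsS.1)).or (ih hsA.2 hsS.2)

theorem subset (hS : IsTransitiveClass S) (ht : IsTermOver A S t) (hu : IsTermOver A S u) :
    DefinableOver A S fun v => t v ⊆ u v :=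
  ball hS ht (mem (.var 0) hu.tail)

theorem nonempty (hS : IsTransitiveClass S) (ht : IsTermOver A S t) :
    DefinableOver A S fun v => (t v).Nonempty :=
  (bex hS ht (mem (.var 0) ht.tail)).congr fun _ _ =>
    ⟨fun ⟨x, hx, _⟩ => ⟨x, hx⟩, fun ⟨x, hx⟩ => ⟨x, hx, hx⟩⟩

theorem isTransitive (hS : IsTransitiveClass S) (ht : IsTermOver A S t) :
    DefinableOver A S fun v => (t v).IsTransitive :=
  ball hS ht (subset hS (.var 0) ht.tail)

theorem isOrdinal (hS : IsTransitiveClass S) (ht : IsTermOver A S t) :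
    DefinableOver A S fun v => (t v).IsOrdinal :=
  ((isTransitive hS ht).and (ball hS ht (isTransitive hS (.var 0)))).congr fun _ _ =>
    ZFSet.isOrdinal_iff_forall_mem_isTransitive.symm

end DefinableOver

end Definability

/-- The inclusion of an elementary submodel as an elementary embedding of Mathlib, which gives
access to the model-theory library. -/
def ElemSub.elementaryEmbedding {M N : Set ZFSet} (h : ElemSub M N) : M ↪ₑ[Language.order] N where
  toFun := Set.inclusion h.1
  map_formula' k φ v := (h.2 k φ (fun i => v i) (fun i => (v i).2) fun i => h.1 (v i).2).symm

theorem ElemSub.exists_mem {M N : Set ZFSet} (h : ElemSub M N) {P : ZFSet → Prop}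
    (hP : DefinableOver M N fun v : Fin 1 → ZFSet => P (v 0)) (hex : ∃ a ∈ N, P a) :
    ∃ a ∈ M, P a := by
  obtain ⟨φ, hφ⟩ := Set.definable_iff_exists_formula_sum.1 hP
  have realize_iff (v : Fin 1 → N) : P (v 0) ↔ φ.Realize (Sum.elim (↑) v) := Set.ext_iff.1 hφ v
  let j := h.elementaryEmbedding
  let params : {a : N | (a : ZFSet) ∈ M} → M := fun a => ⟨a, a.2⟩
  obtain ⟨a, haN, ha⟩ := hex
  have hN : (φ.iExs (Fin 1)).Realize (j ∘ params) :=
    Language.Formula.realize_iExs.2 ⟨fun _ => ⟨a, haN⟩, (realize_iff _).1 ha⟩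
  obtain ⟨b, hb⟩ := Language.Formula.realize_iExs.1 ((j.map_formula _ _).1 hN)
  have hjb : φ.Realize (Sum.elim (j ∘ params) (j ∘ b)) := by rwa [← Sum.comp_elim, j.map_formula]
  exact ⟨b 0, (b 0).2, (realize_iff (j ∘ b)).2 hjb⟩

theorem ElemSub.forall_mem {M N : Set ZFSet} (h : ElemSub M N) {P : ZFSet → Prop}
    (hP : DefinableOver M N fun v : Fin 1 → ZFSet => P (v 0)) (hall : ∀ a ∈ M, P a) :
    ∀ a ∈ N, P a := by
  by_contra! hex
  obtain ⟨a, haM, ha⟩ := h.exists_mem hP.not hex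
  exact ha (hall a haM)

theorem exists_subset_cofinal_finite_inter_Iio {α : Type*} [LinearOrder α] {t : Set α}
    (ht : t.Countable) :
    ∃ c ⊆ t, (∀ a ∈ t, ∃ b ∈ c, a ≤ b) ∧ ∀ a ∈ t, (c ∩ Set.Iio a).Finite := by
  obtain rfl | hne := t.eq_empty_or_nonempty
  · exact ⟨∅, subset_rfl, by simp⟩
  obtain ⟨d, rfl⟩ := ht.exists_eq_range hne
  refine ⟨Set.range (partialSups d), ?_, ?_, ?_⟩
  · rintro _ ⟨n, rfl⟩
    obtain ⟨m, -, hm⟩ := exists_partialSups_eq d n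
    exact ⟨m, hm.symm⟩
  · rintro _ ⟨n, rfl⟩
    exact ⟨_, ⟨n, rfl⟩, le_partialSups d n⟩
  · rintro _ ⟨n, rfl⟩
    refine ((Set.finite_Iio n).image (partialSups d)).subset ?_
    rintro _ ⟨⟨m, rfl⟩, hm⟩
    refine ⟨m, Set.mem_Iio.2 (not_le.1 fun hnm => ?_), rfl⟩
    exact hm.not_ge ((le_partialSups d n).trans ((partialSups d).monotone hnm))

/-- `c` has elements of `α` above every element of `α`; the set `α`, typically an ordinal, is
ordered by membership. -/
def IsCofinalIn (c α : ZFSet) : Prop := ∀ β ∈ α, ∃ γ ∈ α, γ ∈ c ∧ β ∈ γ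

/-- Some element of `κ` is a limit point of `c`. -/
def HasLimitPointIn (c κ : ZFSet) : Prop := ∃ α ∈ κ, α.Nonempty ∧ IsCofinalIn c α

/-- For an ordinal `κ` this says that the cofinality of `κ` is uncountable, phrased without
functions: `κ` has no maximum and every cofinal subset of `κ` has a limit point below `κ`. -/
def HasUncountableCofinality (κ : ZFSet) : Prop :=
  IsCofinalIn κ κ ∧ ∀ c ⊆ κ, IsCofinalIn c κ → HasLimitPointIn c κ

theorem IsCofinalIn.mono {c d α : ZFSet} (hc : IsCofinalIn c α)
    (h : ∀ γ ∈ α, γ ∈ c → γ ∈ d) : IsCofinalIn d α := fun β hβ =>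
  let ⟨γ, hγα, hγc, hβγ⟩ := hc β hβ
  ⟨γ, hγα, h γ hγα hγc, hβγ⟩

theorem not_isCofinalIn_of_finite {c α : ZFSet} (hα : α.Nonempty)
    (hfin : (c ∩ α).toSet.Finite) : ¬ IsCofinalIn c α := by
  intro hc
  obtain ⟨β, hβ⟩ := hα
  obtain ⟨γ, hγα, hγc, -⟩ := hc β hβ
  obtain ⟨m, hm, hmax⟩ :=
    Set.exists_max_image _ ZFSet.rank hfin ⟨γ, ZFSet.mem_inter.2 ⟨hγc, hγα⟩⟩
  obtain ⟨ζ, hζα, hζc, hmζ⟩ := hc m (ZFSet.mem_inter.1 hm).2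
  exact (hmax ζ (ZFSet.mem_inter.2 ⟨hζc, hζα⟩)).not_gt (ZFSet.rank_lt_of_mem hmζ)

theorem isCofinalIn_toZFSet {c : ZFSet} {o : Ordinal} :
    IsCofinalIn c o.toZFSet ↔ ∀ p < o, ∃ q < o, q.toZFSet ∈ c ∧ p < q := by
  constructor
  · intro h p hp
    obtain ⟨_, hγ, hγc, hpγ⟩ := h _ (Ordinal.toZFSet_mem_toZFSet_iff.2 hp)
    obtain ⟨q, hq, rfl⟩ := Ordinal.mem_toZFSet_iff.1 hγ
    exact ⟨q, hq, hγc, Ordinal.toZFSet_mem_toZFSet_iff.1 hpγ⟩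
  · intro h β hβ
    obtain ⟨p, hp, rfl⟩ := Ordinal.mem_toZFSet_iff.1 hβ
    obtain ⟨q, hq, hqc, hpq⟩ := h p hp
    exact ⟨_, Ordinal.toZFSet_mem_toZFSet_iff.2 hq, hqc, Ordinal.toZFSet_mem_toZFSet_iff.2 hpq⟩

theorem hasUncountableCofinality_toZFSet {o : Ordinal} (ho : Cardinal.aleph0 < o.cof) :
    HasUncountableCofinality o.toZFSet := by
  have hlim : Order.IsSuccLimit o := Ordinal.one_lt_cof_iff.1 (Cardinal.one_lt_aleph0.trans ho)
  refine ⟨isCofinalIn_toZFSet.2 fun p hp => ⟨Order.succ p, hlim.succ_lt hp,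
    Ordinal.toZFSet_mem_toZFSet_iff.2 (hlim.succ_lt hp), Order.lt_succ p⟩, fun c _ hc => ?_⟩
  choose! next next_lt next_mem lt_next using isCofinalIn_toZFSet.1 hc
  have nfp_lt : Ordinal.nfp next 0 < o := Ordinal.nfp_lt_ord ho next_lt hlim.bot_lt
  have iterate_lt (n : ℕ) : next^[n] 0 < o := (Ordinal.iterate_le_nfp next 0 n).trans_lt nfp_lt
  have iterate_lt_succ (n : ℕ) : next^[n] 0 < next^[n + 1] 0 := by
    rw [Function.iterate_succ_apply']
    exact lt_next _ (iterate_lt n)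
  have iterate_lt_nfp (n : ℕ) : next^[n] 0 < Ordinal.nfp next 0 :=
    Ordinal.lt_nfp_iff.2 ⟨n + 1, iterate_lt_succ n⟩
  refine ⟨(Ordinal.nfp next 0).toZFSet, Ordinal.toZFSet_mem_toZFSet_iff.2 nfp_lt,
    ⟨_, Ordinal.toZFSet_mem_toZFSet_iff.2 (iterate_lt_nfp 0)⟩, isCofinalIn_toZFSet.2 fun p hp => ?_⟩
  obtain ⟨n, hn⟩ := Ordinal.lt_nfp_iff.1 hp
  refine ⟨next^[n + 1] 0, iterate_lt_nfp _, ?_, hn.trans (iterate_lt_succ n)⟩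
  rw [Function.iterate_succ_apply']
  exact next_mem _ (iterate_lt n)

theorem IsCofinalIn.exists_subset_finite_inter {κ a : ZFSet} (hκ : κ.IsOrdinal)
    (h : IsCofinalIn a κ) (ha : Ctble a) :
    ∃ c ⊆ κ ∩ a, IsCofinalIn c κ ∧ ∀ s ∈ κ, (c ∩ s).toSet.Finite := by
  obtain ⟨o, rfl⟩ := ZFSet.isOrdinal_iff_mem_range_toZFSet.1 hκ
  rw [isCofinalIn_toZFSet] at h
  have ht : {q : Ordinal | q < o ∧ q.toZFSet ∈ a}.Countable :=
    Set.MapsTo.countable_of_injOn (f := Ordinal.toZFSet) (fun _ hq => hq.2)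
      Ordinal.toZFSet_injective.injOn ha
  obtain ⟨d, hdt, hd, hfin⟩ := exists_subset_cofinal_finite_inter_Iio ht
  refine ⟨o.toZFSet.sep fun x => ∃ q ∈ d, q.toZFSet = x, fun x hx => ?_,
    isCofinalIn_toZFSet.2 fun p hp => ?_, fun s hs => ?_⟩
  · obtain ⟨hxo, q, hq, rfl⟩ := ZFSet.mem_sep.1 hx
    exact ZFSet.mem_inter.2 ⟨hxo, (hdt hq).2⟩
  · obtain ⟨q, hq, hqa, hpq⟩ := h p hp
    obtain ⟨r, hr, hqr⟩ := hd q ⟨hq, hqa⟩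
    have hro := (hdt hr).1
    exact ⟨r, hro, ZFSet.mem_sep.2 ⟨Ordinal.toZFSet_mem_toZFSet_iff.2 hro, r, hr, rfl⟩,
      hpq.trans_le hqr⟩
  · obtain ⟨p, hp, rfl⟩ := Ordinal.mem_toZFSet_iff.1 hs
    obtain ⟨q, hq, hqa, hpq⟩ := h p hp
    refine ((hfin q ⟨hq, hqa⟩).image Ordinal.toZFSet).subset fun x hx => ?_
    obtain ⟨hx, hxp⟩ := ZFSet.mem_inter.1 hx
    obtain ⟨-, r, hr, rfl⟩ := ZFSet.mem_sep.1 hx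
    exact ⟨r, ⟨hr, (Ordinal.toZFSet_mem_toZFSet_iff.1 hxp).trans hpq⟩, rfl⟩

theorem finite_inter_of_not_isCofinalIn {δ a x : ZFSet} (hδ : δ.IsOrdinal)
    (hlim : IsCofinalIn δ δ) (hxδ : x ⊆ δ) (hx : ∀ s ∈ δ, (x ∩ s).toSet.Finite)
    (ha : ¬ IsCofinalIn a δ) : (a ∩ x).toSet.Finite := by
  simp only [IsCofinalIn, not_forall, not_exists, not_and] at ha
  obtain ⟨β, hβ, hbound⟩ := ha
  obtain ⟨s, hs, -, hβs⟩ := hlim β hβ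
  refine (hx s hs).subset fun γ hγ => ?_
  obtain ⟨hγa, hγx⟩ := ZFSet.mem_inter.1 hγ
  have hγβ : γ ⊆ β :=
    ((hδ.mem hβ).notMem_iff_subset (hδ.mem (hxδ hγx))).1 (hbound γ (hxδ hγx) hγa)
  exact ZFSet.mem_inter.2
    ⟨hγx, (hδ.mem (hxδ hγx)).mem_of_subset_of_mem (hδ.mem hs) hγβ hβs⟩

theorem HasUncountableCofinality.not_isCofinalIn {κ a : ZFSet} (h : HasUncountableCofinality κ)
    (hκ : κ.IsOrdinal) (ha : Ctble a) : ¬ IsCofinalIn a κ := by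
  intro hcof
  obtain ⟨c, hca, hc, hfin⟩ := hcof.exists_subset_finite_inter hκ ha
  obtain ⟨α, hα, hne, hcα⟩ := h.2 c (fun _ hx => (ZFSet.mem_inter.1 (hca hx)).1) hc
  exact not_isCofinalIn_of_finite hne (hfin α hα) hcα

namespace DefinableOver

variable {A S : Set ZFSet} {n : ℕ} {t u : (Fin n → ZFSet) → ZFSet}

theorem isCofinalIn (hS : IsTransitiveClass S) (ht : IsTermOver A S t) (hu : IsTermOver A S u) :
    DefinableOver A S fun v => IsCofinalIn (t v) (u v) :=
  ball hS hu (bex hS hu.tail ((mem (.var 0) ht.tail.tail).and (mem (.var 1) (.var 0))))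

theorem hasLimitPointIn (hS : IsTransitiveClass S) (ht : IsTermOver A S t)
    (hu : IsTermOver A S u) : DefinableOver A S fun v => HasLimitPointIn (t v) (u v) :=
  bex hS hu ((nonempty hS (.var 0)).and (isCofinalIn hS ht.tail (.var 0)))

theorem hasUncountableCofinality (hS : IsSupertransitiveClass S) (ht : IsTermOver A S t) :
    DefinableOver A S fun v => HasUncountableCofinality (t v) := by
  have htrans := hS.isTransitiveClass
  have hlimit : DefinableOver A S fun v =>
      ∀ c ∈ S, c ⊆ t v → IsCofinalIn c (t v) → HasLimitPointIn c (t v) :=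
    forall_mem ((subset htrans (.var 0) ht.tail).imp
      ((isCofinalIn htrans (.var 0) ht.tail).imp (hasLimitPointIn htrans (.var 0) ht.tail)))
  exact ((isCofinalIn htrans ht ht).and hlimit).congr fun _ hv => and_congr_right fun _ =>
    ⟨fun h c hc => h c (hS.mem_of_subset hc (ht.mem_of_forall_mem hv)) hc, fun h c _ => h c⟩

end DefinableOver

namespace ElemSub

variable {M : ZFSet} {N : Set ZFSet} {κ c x : ZFSet}

theorem isTermOver {n : ℕ} (hM : ElemSub M.toSet N) {a : ZFSet} (ha : a ∈ M) :
    IsTermOver M.toSet N fun _ : Fin n → ZFSet => a := .const ha (hM.1 ha)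

theorem exists_mem_inter (hM : ElemSub M.toSet N) (hN : IsTransitiveClass N) {a : ZFSet}
    (ha : a ∈ M) {P : ZFSet → Prop}
    (hP : DefinableOver M.toSet N fun v : Fin 1 → ZFSet => P (v 0)) (hex : ∃ x ∈ a, P x) :
    ∃ x ∈ a ∩ M, P x := by
  obtain ⟨x, hx, hPx⟩ := hex
  obtain ⟨y, hyM, hya, hPy⟩ := hM.exists_mem (P := fun x => x ∈ a ∧ P x)
    ((DefinableOver.mem (.var 0) (hM.isTermOver ha)).and hP) ⟨x, hN hx (hM.1 ha), hx, hPx⟩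
  exact ⟨y, ZFSet.mem_inter.2 ⟨hya, hyM⟩, hPy⟩

theorem forall_mem_of_forall_mem_inter (hM : ElemSub M.toSet N) (hN : IsTransitiveClass N)
    {a : ZFSet} (ha : a ∈ M) {P : ZFSet → Prop}
    (hP : DefinableOver M.toSet N fun v : Fin 1 → ZFSet => P (v 0)) (hall : ∀ x ∈ a ∩ M, P x) :
    ∀ x ∈ a, P x := by
  by_contra! hex
  obtain ⟨x, hx, hPx⟩ := hM.exists_mem_inter hN ha hP.not hex
  exact hPx (hall x hx)

theorem inter_nonempty (hM : ElemSub M.toSet N) (hN : IsTransitiveClass N) {a : ZFSet}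
    (ha : a ∈ M) (hne : a.Nonempty) : (a ∩ M).Nonempty := by
  obtain ⟨x, hx⟩ := hne
  obtain ⟨y, hy, -⟩ := hM.exists_mem_inter hN ha (.mem (.var 0) (hM.isTermOver ha)) ⟨x, hx, hx⟩
  exact ⟨y, hy⟩

theorem mem_of_finite (hM : ElemSub M.toSet N) (hN : IsTransitiveClass N) {z : ZFSet}
    (hzN : z ∈ N) (hzM : z ⊆ M) (hfin : z.toSet.Finite) : z ∈ M := by
  have hzS : z.toSet ⊆ N := fun _ hx => hN hx hzN
  have hz {n : ℕ} : DefinableOver M.toSet N fun v : Fin (n + 1) → ZFSet => v 0 ∈ z.toSet :=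
    .mem_of_finite (.var 0) hfin hzM hzS
  obtain ⟨w, hwM, hw⟩ := hM.exists_mem (P := fun w => ∀ x ∈ N, (x ∈ w → x ∈ z) ∧ (x ∈ z → x ∈ w))
    (.forall_mem (((DefinableOver.mem (.var 0) (.var 1)).imp hz).and
      (hz.imp (.mem (.var 0) (.var 1))))) ⟨z, hzN, fun _ _ => ⟨id, id⟩⟩
  have hwz : w = z := ZFSet.ext fun x =>
    ⟨fun hx => (hw x (hN hx (hM.1 hwM))).1 hx, fun hx => (hw x (hzS hx)).2 hx⟩
  exact hwz ▸ hwM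

theorem isCofinalIn_inter_iff (hM : ElemSub M.toSet N) (hN : IsTransitiveClass N) (hκ : κ ∈ M)
    (hc : c ∈ M) : IsCofinalIn c (κ ∩ M) ↔ IsCofinalIn c κ := by
  have hκt {n : ℕ} := hM.isTermOver (n := n) hκ
  have hct {n : ℕ} := hM.isTermOver (n := n) hc
  constructor
  · intro h
    refine hM.forall_mem_of_forall_mem_inter hN hκ (P := fun β => ∃ γ ∈ κ, γ ∈ c ∧ β ∈ γ)
      (.bex hN hκt ((DefinableOver.mem (.var 0) hct).and (.mem (.var 1) (.var 0)))) fun β hβ => ?_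
    obtain ⟨γ, hγ, hγc⟩ := h β hβ
    exact ⟨γ, (ZFSet.mem_inter.1 hγ).1, hγc⟩
  · intro h β hβ
    obtain ⟨hβκ, hβM⟩ := ZFSet.mem_inter.1 hβ
    exact hM.exists_mem_inter hN hκ (P := fun γ => γ ∈ c ∧ β ∈ γ)
      ((DefinableOver.mem (.var 0) hct).and (.mem (hM.isTermOver hβM) (.var 0))) (h β hβκ)

theorem hasUncountableCofinality_of_inter_mem (hM : ElemSub M.toSet N)
    (hN : IsSupertransitiveClass N) (hκ : κ ∈ M) (hδ : κ ∩ M ∈ κ) :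
    HasUncountableCofinality κ := by
  have htrans := hN.isTransitiveClass
  have hκt {n : ℕ} := hM.isTermOver (n := n) hκ
  constructor
  · exact hM.forall_mem_of_forall_mem_inter htrans hκ (P := fun β => ∃ γ ∈ κ, γ ∈ κ ∧ β ∈ γ)
      (.bex htrans hκt ((DefinableOver.mem (.var 0) hκt).and (.mem (.var 1) (.var 0))))
      fun β hβ => ⟨κ ∩ M, hδ, hδ, hβ⟩
  · intro c hcκ
    exact hM.forall_mem (P := fun c => c ⊆ κ → IsCofinalIn c κ → HasLimitPointIn c κ)
      ((DefinableOver.subset htrans (.var 0) hκt).imp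
        ((DefinableOver.isCofinalIn htrans (.var 0) hκt).imp
          (.hasLimitPointIn htrans (.var 0) hκt)))
      (fun c hcM _ hc => ⟨κ ∩ M, hδ, hM.inter_nonempty htrans hκ ⟨_, hδ⟩,
        (hM.isCofinalIn_inter_iff htrans hκ hcM).2 hc⟩) c (hN.mem_of_subset hcκ (hM.1 hκ)) hcκ

theorem approxIn_of_finite_inter (hM : ElemSub M.toSet N) (hN : IsSupertransitiveClass N)
    (hκM : κ ∈ M) (hκ : κ.IsOrdinal) (hδκ : κ ∩ M ∈ κ) (hxδ : x ⊆ κ ∩ M)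
    (hfin : ∀ s ∈ κ ∩ M, (x ∩ s).toSet.Finite) : ApproxIn M x := by
  intro a ha hactble
  have htrans := hN.isTransitiveClass
  have hcof := hM.hasUncountableCofinality_of_inter_mem hN hκM hδκ
  have hlim : IsCofinalIn (κ ∩ M) (κ ∩ M) :=
    ((hM.isCofinalIn_inter_iff htrans hκM hκM).2 hcof.1).mono fun _ h _ => h
  have hacof : ¬ IsCofinalIn a (κ ∩ M) := by
    rw [hM.isCofinalIn_inter_iff htrans hκM ha]
    exact hcof.not_isCofinalIn hκ hactble
  exact hM.mem_of_finite htrans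
    (hN.mem_of_subset (fun _ h => (ZFSet.mem_inter.1 h).1) (hM.1 ha))
    (fun _ h => (ZFSet.mem_inter.1 (hxδ (ZFSet.mem_inter.1 h).2)).2)
    (finite_inter_of_not_isCofinalIn (hκ.mem hδκ) hlim hxδ hfin hacof)

theorem hasLimitPointIn_inter_of_guessedIn (hM : ElemSub M.toSet N) (hN : IsTransitiveClass N)
    (hκM : κ ∈ M) (hκ : κ.IsOrdinal) (hδκ : κ ∩ M ∈ κ) (hx : IsCofinalIn x (κ ∩ M))
    (hguess : GuessedIn M x) : HasLimitPointIn x (κ ∩ M) := by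
  obtain ⟨y, hyM, hy⟩ := hguess
  have hyx {γ : ZFSet} (hγ : γ ∈ κ ∩ M) : γ ∈ y ↔ γ ∈ x := by
    simpa only [ZFSet.mem_inter, (ZFSet.mem_inter.1 hγ).2, and_true] using ZFSet.ext_iff.1 hy γ
  obtain ⟨α, hα, hαne, hyα⟩ := hM.exists_mem_inter hN hκM
    (P := fun α => α.Nonempty ∧ IsCofinalIn y α)
    ((DefinableOver.nonempty hN (.var 0)).and (.isCofinalIn hN (hM.isTermOver hyM) (.var 0)))
    ⟨κ ∩ M, hδκ, hM.inter_nonempty hN hκM ⟨_, hδκ⟩, hx.mono fun _ hγ => (hyx hγ).2⟩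
  exact ⟨α, hα, hαne, hyα.mono fun _ hγ => (hyx ((hκ.mem hδκ).mem_trans hγ hα)).1⟩

end ElemSub

theorem IsGuessing.not_ctble_inter {M κ : ZFSet} {N : Set ZFSet} (hg : IsGuessing M)
    (hM : ElemSub M.toSet N) (hN : IsSupertransitiveClass N) (hκM : κ ∈ M) (hκ : κ.IsOrdinal)
    (hδκ : κ ∩ M ∈ κ) : ¬ Ctble (κ ∩ M) := by
  intro hctble
  have htrans := hN.isTransitiveClass
  have hcof := hM.hasUncountableCofinality_of_inter_mem hN hκM hδκ
  have hlim : IsCofinalIn (κ ∩ M) (κ ∩ M) :=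
    ((hM.isCofinalIn_inter_iff htrans hκM hκM).2 hcof.1).mono fun _ h _ => h
  obtain ⟨x, hxδ, hx, hfin⟩ := hlim.exists_subset_finite_inter (hκ.mem hδκ) hctble
  replace hxδ : x ⊆ κ ∩ M := fun _ h => (ZFSet.mem_inter.1 (hxδ h)).1
  have happrox : ApproxIn M x := hM.approxIn_of_finite_inter hN hκM hκ hδκ hxδ hfin
  have hbdd : BoundedIn M x := ⟨κ, hκM, fun _ h => (ZFSet.mem_inter.1 (hxδ h)).1⟩
  obtain ⟨α, hα, hαne, hxα⟩ :=
    hM.hasLimitPointIn_inter_of_guessedIn htrans hκM hκ hδκ hx ((hg x hbdd).1 happrox)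
  exact not_isCofinalIn_of_finite hαne (hfin α hα) hxα

theorem exists_isOrdinal_inter_eq {M δ κ₀ : ZFSet} (hδM : δ ⊆ M) (hδ : δ ∉ M)
    (hκ₀M : κ₀ ∈ M) (hκ₀ : κ₀.IsOrdinal) (hδκ₀ : δ ∈ κ₀) :
    ∃ κ ∈ M, κ.IsOrdinal ∧ δ ∈ κ ∧ κ ∩ M = δ := by
  obtain ⟨κ, ⟨hκM, hκ, hδκ⟩, hmin⟩ :=
    ZFSet.mem_wf.has_min {κ | κ ∈ M ∧ κ.IsOrdinal ∧ δ ∈ κ} ⟨κ₀, hκ₀M, hκ₀, hδκ₀⟩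
  refine ⟨κ, hκM, hκ, hδκ, ZFSet.ext fun x => ?_⟩
  rw [ZFSet.mem_inter]
  refine ⟨fun ⟨hxκ, hxM⟩ => ?_, fun hx => ⟨hκ.mem_trans hx hδκ, hδM hx⟩⟩
  have hxord := hκ.mem hxκ
  obtain hlt | rfl | hgt := hxord.mem_trichotomous (hκ.mem hδκ)
  · exact hlt
  · exact absurd hxM hδ
  · exact absurd hxκ (hmin x ⟨hxM, hxord, hgt⟩)

theorem toSet_subset_tcl (x : ZFSet) : x.toSet ⊆ tcl x := fun _ hy => Set.mem_iUnion.2 ⟨0, hy⟩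

theorem isTransitiveClass_tcl (x : ZFSet) : IsTransitiveClass (tcl x) := fun _ _ hyz hz =>
  let ⟨n, hn⟩ := Set.mem_iUnion.1 hz
  Set.mem_iUnion.2 ⟨n + 1, ZFSet.mem_sUnion.2 ⟨_, hn, hyz⟩⟩

theorem tcl_subset {x : ZFSet} {S : Set ZFSet} (hS : IsTransitiveClass S) (hx : x.toSet ⊆ S) :
    tcl x ⊆ S := by
  refine Set.iUnion_subset fun n => ?_
  induction n with
  | zero => exact hx
  | succ n ih =>
    intro y hy
    obtain ⟨z, hz, hyz⟩ := ZFSet.mem_sUnion.1 hy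
    exact hS hyz (ih hz)

theorem mem_HSet_of_toSet_subset_tcl {θ : Cardinal} {x y : ZFSet} (hxy : x.toSet ⊆ tcl y)
    (hy : y ∈ HSet θ) : x ∈ HSet θ :=
  (Cardinal.mk_le_mk_of_subset (tcl_subset (isTransitiveClass_tcl y) hxy)).trans_lt hy

theorem isSupertransitiveClass_HSet (θ : Cardinal) : IsSupertransitiveClass (HSet θ) where
  isTransitiveClass _ y hxy := mem_HSet_of_toSet_subset_tcl fun _ hz =>
    isTransitiveClass_tcl y hz (toSet_subset_tcl y hxy)
  mem_of_subset _ y hxy := mem_HSet_of_toSet_subset_tcl fun _ hz => toSet_subset_tcl y (hxy hz)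

theorem mem_HSet_of_isTransitive {θ : Cardinal} {x : ZFSet} (hx : x.IsTransitive)
    (hcard : Cardinal.mk x.toSet < θ) : x ∈ HSet θ :=
  (Cardinal.mk_le_mk_of_subset (tcl_subset (fun _ _ hyz hz => hx _ hz hyz) subset_rfl)).trans_lt
    hcard

theorem toZFSet_mem_HSet.{u} {θ : Cardinal.{u + 1}} {o : Ordinal.{u}}
    (ho : Cardinal.lift.{u + 1} o.card < θ) : o.toZFSet ∈ HSet θ := by
  refine mem_HSet_of_isTransitive (ZFSet.isOrdinal_toZFSet o).isTransitive ?_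
  rw [← Ordinal.card_toZFSet, ← ZFSet.cardinalMk_coe_sort] at ho
  exact ho

theorem omega1_subset_of_guessing_general {N : Set ZFSet} {M : ZFSet}
    (hN : IsSupertransitiveClass N) (hω₁ : (Ordinal.omega 1).toZFSet ∈ N)
    (hM : ElemSub M.toSet N) (hg : IsGuessing M) : Omega1Sub M := by
  by_contra hsub
  simp only [Omega1Sub, not_forall] at hsub
  obtain ⟨ξ, hξ, hξctble, hξM⟩ := hsub
  obtain ⟨δ, ⟨hδ, hδctble, hδM⟩, hmin⟩ :=
    ZFSet.mem_wf.has_min {x | x.IsOrdinal ∧ Ctble x ∧ x ∉ M} ⟨ξ, hξ, hξctble, hξM⟩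
  have hδsub : δ ⊆ M := fun β hβ => by
    by_contra hβM
    exact hmin β ⟨hδ.mem hβ, hδctble.mono (hδ.subset_of_mem hβ), hβM⟩ hβ
  obtain ⟨κ₀, hκ₀M, hκ₀, hcof⟩ := hM.exists_mem
    (P := fun κ => κ.IsOrdinal ∧ HasUncountableCofinality κ)
    ((DefinableOver.isOrdinal hN.isTransitiveClass (.var 0)).and
      (.hasUncountableCofinality hN (.var 0)))
    ⟨_, hω₁, ZFSet.isOrdinal_toZFSet _, hasUncountableCofinality_toZFSet (by simp)⟩
  have hδκ₀ : δ ∈ κ₀ := (hδ.mem_or_subset hκ₀).resolve_right fun hκ₀δ =>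
    hcof.not_isCofinalIn hκ₀ (hδctble.mono hκ₀δ) hcof.1
  obtain ⟨κ, hκM, hκ, hδκ, rfl⟩ := exists_isOrdinal_inter_eq hδsub hδM hκ₀M hκ₀ hδκ₀
  exact hg.not_ctble_inter hM hN hκM hκ hδκ hδctble

/-- Let `θ ≥ ω₂` be a cardinal and let `M` be an elementary submodel of
`H_θ` which is an `ω₁`-guessing set.  Then `ω₁ ⊆ M`. -/
theorem omega1_subset_of_guessing (θ : Cardinal) (hθ : Cardinal.aleph 2 ≤ θ)
    (M : ZFSet) (hM : ElemSub M.toSet (HSet θ)) (hg : IsGuessing M) :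
    Omega1Sub M := by
  have hω₁ : (Ordinal.omega 1).toZFSet ∈ HSet θ :=
    toZFSet_mem_HSet (by simpa using (Cardinal.aleph_lt_aleph.2 one_lt_two).trans_le hθ)
  exact omega1_subset_of_guessing_general (isSupertransitiveClass_HSet θ) hω₁ hM hg

end GuessingPaper
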